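/- arXiv:2602.05048 — 2 statements merged into one kernel-verified Lean document; each statement's English description precedes it below -/
import Mathlib

section
/- (Lemma 4.2, one-step Bellman bound.) Let M = (T,R) and M̄ = (T',R') be two finite discounted MDPs on (S, A, γ), and let Q_M, Q_{M̄} : S × A → ℝ be two functions such that (i) |max_{a'∈A} Q_{M̄}(s',a')| ≤ V*_{M̄}(s') and |max_{a'∈A} Q_M(s',a')| ≤ V*_M(s') for all s' ∈ S, and (ii) |Q_M(s,a) − Q_{M̄}(s,a)| ≤ Δ_{s,a}(M, M̄) for all (s,a) ∈ S × A. Then |(Γ_M Q_M)(s,a) − (Γ_{M̄} Q_{M̄})(s,a)| ≤ Δ_{s,a}(M, M̄) for all (s,a) ∈ S × A. -/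
open Finset

variable {S A : Type*}

/-- Max over the (finite, nonempty) action space. -/
noncomputable def qmax [Fintype A] [Nonempty A] (f : A → ℝ) : ℝ :=
  Finset.univ.sup' Finset.univ_nonempty f

/-- Bellman operator `Γ_M` of the MDP `M = (T, R)` with discount `γ`. -/
noncomputable def bellman [Fintype S] [Fintype A] [Nonempty A]
    (γ : ℝ) (T : S → A → S → ℝ) (R : S → A → ℝ)
    (f : S → A → ℝ) : S → A → ℝ :=
  fun s a => R s a + γ * ∑ s' : S, T s a s' * qmax (f s')

/-- `D_{s,a}(M‖M̄)`, where `Vbar` is the optimal value function of `M̄`. -/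
noncomputable def Dop [Fintype S]
    (γ : ℝ) (T : S → A → S → ℝ) (R : S → A → ℝ)
    (T' : S → A → S → ℝ) (R' : S → A → ℝ) (Vbar : S → ℝ) : S → A → ℝ :=
  fun s a => |R s a - R' s a| + γ * ∑ s' : S, Vbar s' * |T s a s' - T' s a s'|

/-- The operator `L_{M‖M̄}`, where `Vbar` is the optimal value function of `M̄`. -/
noncomputable def Lop [Fintype S] [Fintype A] [Nonempty A]
    (γ : ℝ) (T : S → A → S → ℝ) (R : S → A → ℝ)
    (T' : S → A → S → ℝ) (R' : S → A → ℝ) (Vbar : S → ℝ)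
    (f : S → A → ℝ) : S → A → ℝ :=
  fun s a => Dop γ T R T' R' Vbar s a + γ * ∑ s' : S, T s a s' * qmax (f s')

section OrderedSums

variable {ι α : Type*}

theorem sup'_le_sup'_add_sup' [Add α] [SemilatticeSup α] [AddLeftMono α] [AddRightMono α]
    {s : Finset ι} (hs : s.Nonempty) {f g d : ι → α} (h : ∀ i ∈ s, f i ≤ g i + d i) :
    s.sup' hs f ≤ s.sup' hs g + s.sup' hs d :=
  sup'_le hs f fun i hi => (h i hi).trans (add_le_add (le_sup' g hi) (le_sup' d hi))

theorem abs_sup'_sub_sup'_le [AddCommGroup α] [LinearOrder α] [IsOrderedAddMonoid α]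
    {s : Finset ι} (hs : s.Nonempty) {f g d : ι → α} (h : ∀ i ∈ s, |f i - g i| ≤ d i) :
    |s.sup' hs f - s.sup' hs g| ≤ s.sup' hs d :=
  abs_sub_le_iff.2
    ⟨sub_le_iff_le_add'.2 <| sup'_le_sup'_add_sup' hs fun i hi =>
        sub_le_iff_le_add'.1 (abs_sub_le_iff.1 (h i hi)).1,
      sub_le_iff_le_add'.2 <| sup'_le_sup'_add_sup' hs fun i hi =>
        sub_le_iff_le_add'.1 (abs_sub_le_iff.1 (h i hi)).2⟩

variable [Ring α] [LinearOrder α] [IsOrderedRing α]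

theorem abs_mul_sub_mul_le {p q u v b e : α} (hp : 0 ≤ p) (hv : |v| ≤ b) (huv : |u - v| ≤ e) :
    |p * u - q * v| ≤ |p - q| * b + p * e :=
  calc |p * u - q * v| = |(p - q) * v + p * (u - v)| := by rw [sub_mul, mul_sub]; abel_nf
    _ ≤ |(p - q) * v| + |p * (u - v)| := abs_add_le _ _
    _ = |p - q| * |v| + p * |u - v| := by rw [abs_mul, abs_mul, abs_of_nonneg hp]
    _ ≤ |p - q| * b + p * e := by gcongr

theorem abs_sum_mul_sub_sum_mul_le (s : Finset ι) {p q u v b e : ι → α}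
    (hp : ∀ i ∈ s, 0 ≤ p i) (hv : ∀ i ∈ s, |v i| ≤ b i) (huv : ∀ i ∈ s, |u i - v i| ≤ e i) :
    |∑ i ∈ s, p i * u i - ∑ i ∈ s, q i * v i| ≤
      ∑ i ∈ s, |p i - q i| * b i + ∑ i ∈ s, p i * e i := by
  rw [← sum_sub_distrib, ← sum_add_distrib]
  exact (abs_sum_le_sum_abs _ _).trans <| sum_le_sum fun i hi =>
    abs_mul_sub_mul_le (hp i hi) (hv i hi) (huv i hi)

end OrderedSums

section Bellman

variable [Fintype A] [Nonempty A]

theorem abs_qmax_sub_qmax_le {f g d : A → ℝ} (h : ∀ a, |f a - g a| ≤ d a) :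
    |qmax f - qmax g| ≤ qmax d :=
  abs_sup'_sub_sup'_le univ_nonempty fun a _ => h a

variable [Fintype S] {γ : ℝ} {T T' : S → A → S → ℝ} {R R' : S → A → ℝ}

theorem abs_bellman_sub_bellman_le_Lop (hγ : 0 ≤ γ) {V : S → ℝ} {f g d : S → A → ℝ}
    (hg : ∀ s, |qmax (g s)| ≤ V s) (hfg : ∀ s a, |f s a - g s a| ≤ d s a)
    {s : S} {a : A} (hT : ∀ s', 0 ≤ T s a s') :
    |bellman γ T R f s a - bellman γ T' R' g s a| ≤ Lop γ T R T' R' V d s a := by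
  have hsum : |∑ s', T s a s' * qmax (f s') - ∑ s', T' s a s' * qmax (g s')| ≤
      ∑ s', |T s a s' - T' s a s'| * V s' + ∑ s', T s a s' * qmax (d s') :=
    abs_sum_mul_sub_sum_mul_le univ (fun s' _ => hT s') (fun s' _ => hg s')
      fun s' _ => abs_qmax_sub_qmax_le (hfg s')
  calc |bellman γ T R f s a - bellman γ T' R' g s a|
      = |(R s a - R' s a) +
          γ * (∑ s', T s a s' * qmax (f s') - ∑ s', T' s a s' * qmax (g s'))| := by
        simp only [bellman]; ring_nf
    _ ≤ |R s a - R' s a| +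
          γ * |∑ s', T s a s' * qmax (f s') - ∑ s', T' s a s' * qmax (g s')| := by
        simpa only [abs_mul, abs_of_nonneg hγ] using abs_add_le (R s a - R' s a) (γ * _)
    _ ≤ |R s a - R' s a| +
          γ * (∑ s', |T s a s' - T' s a s'| * V s' + ∑ s', T s a s' * qmax (d s')) := by
        gcongr
    _ = Lop γ T R T' R' V d s a := by
        simp only [Lop, Dop, mul_comm (V _), mul_add, add_assoc]

theorem one_step_bellman_bound_general (hγ : 0 ≤ γ)
    (hT : ∀ s a s', 0 ≤ T s a s') (hT' : ∀ s a s', 0 ≤ T' s a s')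
    {V V' : S → ℝ} {d d' Q Q' : S → A → ℝ}
    (hd : ∀ s a, Lop γ T R T' R' V' d s a ≤ d s a)
    (hd' : ∀ s a, Lop γ T' R' T R V d' s a ≤ d' s a)
    (hQ : ∀ s, |qmax (Q s)| ≤ V s) (hQ' : ∀ s, |qmax (Q' s)| ≤ V' s)
    (hQQ' : ∀ s a, |Q s a - Q' s a| ≤ min (d s a) (d' s a)) (s : S) (a : A) :
    |bellman γ T R Q s a - bellman γ T' R' Q' s a| ≤ min (d s a) (d' s a) := by
  have hQd : ∀ s a, |Q s a - Q' s a| ≤ d s a := fun s a => (hQQ' s a).trans (min_le_left _ _)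
  have hQd' : ∀ s a, |Q' s a - Q s a| ≤ d' s a := fun s a =>
    (abs_sub_comm _ _).trans_le ((hQQ' s a).trans (min_le_right _ _))
  refine le_min ?_ ?_
  · exact (abs_bellman_sub_bellman_le_Lop hγ hQ' hQd (hT s a)).trans (hd s a)
  · rw [abs_sub_comm]
    exact (abs_bellman_sub_bellman_le_Lop hγ hQ hQd' (hT' s a)).trans (hd' s a)

end Bellman

/-- Lemma 4.2 (one-step Bellman bound with the pseudo-metric `Δ`). -/
theorem one_step_bellman_bound
    [Fintype S] [Nonempty S] [Fintype A] [Nonempty A]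
    (γ : ℝ) (hγ0 : 0 ≤ γ) (hγ1 : γ < 1)
    (T : S → A → S → ℝ) (R : S → A → ℝ)
    (T' : S → A → S → ℝ) (R' : S → A → ℝ)
    (hT : ∀ s a s', 0 ≤ T s a s') (hTsum : ∀ s a, ∑ s' : S, T s a s' = 1)
    (hT' : ∀ s a s', 0 ≤ T' s a s') (hTsum' : ∀ s a, ∑ s' : S, T' s a s' = 1)
    -- `QstarM` and `Qstarbar` are the (unique) fixed points of the Bellman operators of
    -- `M = (T, R)` and `M̄ = (T', R')`, giving the optimal value functions `V*_M`, `V*_{M̄}`.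
    (QstarM : S → A → ℝ) (hQstarM : ∀ s a, QstarM s a = bellman γ T R QstarM s a)
    (Qstarbar : S → A → ℝ)
    (hQstarbar : ∀ s a, Qstarbar s a = bellman γ T' R' Qstarbar s a)
    -- `d1 = d(M‖M̄)` and `d2 = d(M̄‖M)` are the (unique) fixed points of `L_{M‖M̄}` and
    -- `L_{M̄‖M}`; the pseudo-metric is `Δ_{s,a}(M,M̄) = min (d1 s a) (d2 s a)`.
    (d1 : S → A → ℝ)
    (hd1 : ∀ s a, d1 s a = Lop γ T R T' R' (fun s => qmax (Qstarbar s)) d1 s a)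
    (d2 : S → A → ℝ)
    (hd2 : ∀ s a, d2 s a = Lop γ T' R' T R (fun s => qmax (QstarM s)) d2 s a)
    -- the two functions `Q_M` and `Q_{M̄}` and their hypotheses
    (QM QMbar : S → A → ℝ)
    (hboundbar : ∀ s', |qmax (QMbar s')| ≤ qmax (Qstarbar s'))
    (hboundM : ∀ s', |qmax (QM s')| ≤ qmax (QstarM s'))
    (hQQ : ∀ s a, |QM s a - QMbar s a| ≤ min (d1 s a) (d2 s a)) :
    ∀ s a, |bellman γ T R QM s a - bellman γ T' R' QMbar s a| ≤
      min (d1 s a) (d2 s a) := by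
  exact one_step_bellman_bound_general hγ0 hT hT' (fun s a => (hd1 s a).ge)
    (fun s a => (hd2 s a).ge) hboundM hboundbar hQQ
end

section
/- (Theorem 4.4, upper bound of return for an unknown knowledge gap.) Let M1 = (T1,R1), M2 = (T2,R2) and M* = (T*,R*) be three finite discounted MDPs on (S, A, γ) whose rewards are all nonnegative, where M* is an intermediate MDP between M1 and M2 in the sense that, for a fixed state s0 ∈ S and every action a ∈ A, Δ_{s0,a}(M*, M1) ≤ max_{a'∈A} Δ_{s0,a'}(M1, M2) and Δ_{s0,a}(M*, M2) ≤ max_{a'∈A} Δ_{s0,a'}(M1, M2) (as holds when M* corresponds to a convex combination of the descriptors of M1 and M2). Then the optimal return of M* from initial state s0 obeys V*_{M*}(s0) ≤ min(V*_{M1}(s0), V*_{M2}(s0)) + max_{a∈A} Δ_{s0,a}(M1, M2). -/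
open Finset

variable {S A : Type*}

/-!
Everything rests on a comparison principle: for `0 ≤ γ < 1`, a subsolution `u ≤ Γ u` of the Bellman
equation lies below every supersolution `Γ v ≤ v`, as one sees at a maximum of `u - v`. If `Q` and
`Q'` are the optimal Q-functions of `M` and `M'`, and `d = d(M‖M')`, then `Q' + d` is a
supersolution and `Q' - d` a subsolution for `M`, whence `|Q - Q'| ≤ d`. By symmetry
`|Q - Q'| ≤ Δ(M, M')`; maximising over actions at `s0` and applying this to `(M*, M1)` and
`(M*, M2)` gives the bound.
-/

open Function

section qmax

variable [Fintype A] [Nonempty A]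

theorem le_qmax (f : A → ℝ) (a : A) : f a ≤ qmax f :=
  le_sup' f (mem_univ a)

theorem qmax_le {f : A → ℝ} {c : ℝ} (h : ∀ a, f a ≤ c) : qmax f ≤ c :=
  sup'_le _ _ fun a _ => h a

theorem qmax_mono : Monotone (qmax : (A → ℝ) → ℝ) :=
  fun _ g h => qmax_le fun a => (h a).trans (le_qmax g a)

theorem qmax_const (c : ℝ) : qmax (fun _ : A => c) = c :=
  sup'_const _ c

theorem qmax_add_le (f g : A → ℝ) : qmax (f + g) ≤ qmax f + qmax g :=
  qmax_le fun a => add_le_add (le_qmax f a) (le_qmax g a)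

end qmax

/-- Transition kernels with nonnegative entries and row sums at most one. The missing mass is read
as the probability that the process stops with no further reward. -/
structure IsSubstochastic [Fintype S] (T : S → A → S → ℝ) : Prop where
  nonneg : ∀ s a s', 0 ≤ T s a s'
  sum_le_one : ∀ s a, ∑ s', T s a s' ≤ 1

section Bellman

variable [Fintype S] [Fintype A] [Nonempty A] {γ : ℝ} {T T' : S → A → S → ℝ} {R R' : S → A → ℝ}

theorem bellman_mono (hγ0 : 0 ≤ γ) (hT : ∀ s a s', 0 ≤ T s a s') : Monotone (bellman γ T R) := by
  intro f g hfg s a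
  have hsum : ∑ s', T s a s' * qmax (f s') ≤ ∑ s', T s a s' * qmax (g s') :=
    sum_le_sum fun s' _ => mul_le_mul_of_nonneg_left (qmax_mono (hfg s')) (hT s a s')
  exact add_le_add_right (mul_le_mul_of_nonneg_left hsum hγ0) (R s a)

theorem bellman_add_le (hγ0 : 0 ≤ γ) (hT : ∀ s a s', 0 ≤ T s a s') (f g : S → A → ℝ) :
    bellman γ T R (f + g) ≤ bellman γ T R f + bellman γ T 0 g := by
  intro s a
  have hsum : ∑ s', T s a s' * qmax ((f + g) s') ≤
      ∑ s', T s a s' * qmax (f s') + ∑ s', T s a s' * qmax (g s') := by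
    rw [← sum_add_distrib]
    refine sum_le_sum fun s' _ => ?_
    rw [← mul_add]
    exact mul_le_mul_of_nonneg_left (qmax_add_le (f s') (g s')) (hT s a s')
  have hdisc := mul_le_mul_of_nonneg_left hsum hγ0
  simp only [bellman, Pi.add_apply, Pi.zero_apply] at hdisc ⊢
  linarith

theorem bellman_zero_const_le (hγ0 : 0 ≤ γ) (hT : ∀ s a, ∑ s', T s a s' ≤ 1) {m : ℝ}
    (hm : 0 ≤ m) (s : S) (a : A) : bellman γ T 0 (fun _ _ => m) s a ≤ γ * m := by
  simp only [bellman, qmax_const, ← sum_mul, Pi.zero_apply, zero_add]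
  exact mul_le_mul_of_nonneg_left (mul_le_of_le_one_left hm (hT s a)) hγ0

theorem le_of_le_bellman_of_bellman_le (hγ0 : 0 ≤ γ) (hγ1 : γ < 1) (hT : IsSubstochastic T)
    {u v : S → A → ℝ} (hu : u ≤ bellman γ T R u) (hv : bellman γ T R v ≤ v) : u ≤ v := by
  intro s a
  have : Nonempty (S × A) := ⟨(s, a)⟩
  obtain ⟨⟨s₁, a₁⟩, hmax⟩ := Finite.exists_max fun p : S × A => u p.1 p.2 - v p.1 p.2
  set m := u s₁ a₁ - v s₁ a₁
  suffices hm : m ≤ 0 from sub_nonpos.mp ((hmax (s, a)).trans hm)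
  by_contra! hm
  have hu_le : u ≤ v + fun _ _ => m := fun s a => sub_le_iff_le_add'.mp (hmax (s, a))
  have hstep : u s₁ a₁ ≤ v s₁ a₁ + γ * m := calc
    u s₁ a₁ ≤ bellman γ T R u s₁ a₁ := hu s₁ a₁
    _ ≤ bellman γ T R (v + fun _ _ => m) s₁ a₁ := bellman_mono hγ0 hT.nonneg hu_le s₁ a₁
    _ ≤ bellman γ T R v s₁ a₁ + bellman γ T 0 (fun _ _ => m) s₁ a₁ :=
      bellman_add_le hγ0 hT.nonneg v _ s₁ a₁
    _ ≤ v s₁ a₁ + γ * m :=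
      add_le_add (hv s₁ a₁) (bellman_zero_const_le hγ0 hT.sum_le_one hm.le s₁ a₁)
  have hcontract : γ * m < m := mul_lt_of_lt_one_left hm hγ1
  linarith

theorem qmax_nonneg_of_isFixedPt_bellman (hγ0 : 0 ≤ γ) (hγ1 : γ < 1) (hT : IsSubstochastic T)
    (hR : ∀ s a, 0 ≤ R s a) {Q : S → A → ℝ} (hQ : IsFixedPt (bellman γ T R) Q) (s : S) :
    0 ≤ qmax (Q s) := by
  have hzero : (0 : S → A → ℝ) ≤ bellman γ T R 0 := fun s a => by
    simpa [bellman, Pi.zero_def, qmax_const] using hR s a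
  have hQ_nonneg : 0 ≤ Q := le_of_le_bellman_of_bellman_le hγ0 hγ1 hT hzero hQ.le
  exact (qmax_const 0).ge.trans (qmax_mono (hQ_nonneg s))

theorem Lop_eq_Dop_add_bellman (V : S → ℝ) (f : S → A → ℝ) :
    Lop γ T R T' R' V f = Dop γ T R T' R' V + bellman γ T 0 f := by
  ext s a
  simp only [Lop, bellman, Pi.add_apply, Pi.zero_apply, zero_add]

variable (T T' R R') in
theorem abs_bellman_sub_bellman_le_Dop (hγ0 : 0 ≤ γ) {f : S → A → ℝ}
    (hf : ∀ s, 0 ≤ qmax (f s)) (s : S) (a : A) :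
    |bellman γ T R f s a - bellman γ T' R' f s a| ≤
      Dop γ T R T' R' (fun s => qmax (f s)) s a := by
  have hsplit : bellman γ T R f s a - bellman γ T' R' f s a =
      (R s a - R' s a) + γ * ∑ s', qmax (f s') * (T s a s' - T' s a s') := by
    simp only [bellman, mul_comm (qmax _), sub_mul, sum_sub_distrib]
    ring
  have hsum : |∑ s', qmax (f s') * (T s a s' - T' s a s')| ≤
      ∑ s', qmax (f s') * |T s a s' - T' s a s'| := by
    simpa only [abs_mul, abs_of_nonneg (hf _)] using
      abs_sum_le_sum_abs (fun s' => qmax (f s') * (T s a s' - T' s a s')) univ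
  rw [hsplit]
  refine (abs_add_le _ _).trans (add_le_add_right ?_ _)
  rw [abs_mul, abs_of_nonneg hγ0]
  exact mul_le_mul_of_nonneg_left hsum hγ0

section Dissimilarity

variable {Q Q' d : S → A → ℝ}

theorem le_add_dissimilarity (hγ0 : 0 ≤ γ) (hγ1 : γ < 1) (hT : IsSubstochastic T)
    (hQ : IsFixedPt (bellman γ T R) Q) (hQ' : IsFixedPt (bellman γ T' R') Q')
    (hV' : ∀ s, 0 ≤ qmax (Q' s))
    (hd : IsFixedPt (Lop γ T R T' R' fun s => qmax (Q' s)) d) : Q ≤ Q' + d := by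
  have hdiff : bellman γ T R Q' ≤ Q' + Dop γ T R T' R' fun s => qmax (Q' s) := fun s a => by
    have h := (abs_le.mp (abs_bellman_sub_bellman_le_Dop T T' R R' hγ0 hV' s a)).2
    rw [hQ'.eq] at h
    exact sub_le_iff_le_add'.mp h
  have hsuper : bellman γ T R (Q' + d) ≤ Q' + d := calc
    bellman γ T R (Q' + d) ≤ bellman γ T R Q' + bellman γ T 0 d :=
      bellman_add_le hγ0 hT.nonneg Q' d
    _ ≤ Q' + (Dop γ T R T' R' fun s => qmax (Q' s)) + bellman γ T 0 d := by gcongr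
    _ = Q' + d := by rw [add_assoc, ← Lop_eq_Dop_add_bellman, hd.eq]
  exact le_of_le_bellman_of_bellman_le hγ0 hγ1 hT hQ.ge hsuper

theorem sub_dissimilarity_le (hγ0 : 0 ≤ γ) (hγ1 : γ < 1) (hT : IsSubstochastic T)
    (hQ : IsFixedPt (bellman γ T R) Q) (hQ' : IsFixedPt (bellman γ T' R') Q')
    (hV' : ∀ s, 0 ≤ qmax (Q' s))
    (hd : IsFixedPt (Lop γ T R T' R' fun s => qmax (Q' s)) d) : Q' - d ≤ Q := by
  have hdiff : Q' ≤ bellman γ T R Q' + Dop γ T R T' R' fun s => qmax (Q' s) := fun s a => by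
    have h := (abs_le.mp (abs_bellman_sub_bellman_le_Dop T T' R R' hγ0 hV' s a)).1
    rw [hQ'.eq] at h
    exact neg_le_sub_iff_le_add.mp h
  have hsub : Q' ≤ bellman γ T R (Q' - d) + d := calc
    Q' ≤ bellman γ T R (Q' - d + d) + Dop γ T R T' R' fun s => qmax (Q' s) := by
      rwa [sub_add_cancel]
    _ ≤ bellman γ T R (Q' - d) + bellman γ T 0 d + Dop γ T R T' R' fun s => qmax (Q' s) := by
      gcongr
      exact bellman_add_le hγ0 hT.nonneg (Q' - d) d
    _ = bellman γ T R (Q' - d) + d := by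
      rw [add_assoc, add_comm (bellman γ T 0 d), ← Lop_eq_Dop_add_bellman, hd.eq]
  exact le_of_le_bellman_of_bellman_le hγ0 hγ1 hT (sub_le_iff_le_add.mpr hsub) hQ.le

theorem qmax_le_qmax_add_of_min_dissimilarity_le {d' : S → A → ℝ} (hγ0 : 0 ≤ γ) (hγ1 : γ < 1)
    (hT : IsSubstochastic T) (hT' : IsSubstochastic T')
    (hQ : IsFixedPt (bellman γ T R) Q) (hQ' : IsFixedPt (bellman γ T' R') Q')
    (hV : ∀ s, 0 ≤ qmax (Q s)) (hV' : ∀ s, 0 ≤ qmax (Q' s))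
    (hd : IsFixedPt (Lop γ T R T' R' fun s => qmax (Q' s)) d)
    (hd' : IsFixedPt (Lop γ T' R' T R fun s => qmax (Q s)) d')
    {s : S} {c : ℝ} (hc : ∀ a, min (d s a) (d' s a) ≤ c) : qmax (Q s) ≤ qmax (Q' s) + c := by
  refine qmax_le fun a => ?_
  have hle_d : Q s a - Q' s a ≤ d s a :=
    sub_le_iff_le_add'.mpr (le_add_dissimilarity hγ0 hγ1 hT hQ hQ' hV' hd s a)
  have hle_d' : Q s a - Q' s a ≤ d' s a :=
    sub_le_comm.mp (sub_dissimilarity_le hγ0 hγ1 hT' hQ' hQ hV hd' s a)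
  have hle_c : Q s a - Q' s a ≤ c := (le_min hle_d hle_d').trans (hc a)
  linarith [le_qmax (Q' s) a]

end Dissimilarity

end Bellman

theorem return_upper_bound_for_unknown_gap_general [Fintype S] [Fintype A] [Nonempty A]
    {γ : ℝ} (hγ0 : 0 ≤ γ) (hγ1 : γ < 1)
    {T1 T2 Tstar : S → A → S → ℝ} {R1 R2 Rstar : S → A → ℝ}
    (hT1 : IsSubstochastic T1) (hT2 : IsSubstochastic T2) (hTstar : IsSubstochastic Tstar)
    {Q1 Q2 Qstar : S → A → ℝ} (hQ1 : IsFixedPt (bellman γ T1 R1) Q1)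
    (hQ2 : IsFixedPt (bellman γ T2 R2) Q2) (hQstar : IsFixedPt (bellman γ Tstar Rstar) Qstar)
    (hV1 : ∀ s, 0 ≤ qmax (Q1 s)) (hV2 : ∀ s, 0 ≤ qmax (Q2 s))
    (hVstar : ∀ s, 0 ≤ qmax (Qstar s))
    {dA1 dB1 dA2 dB2 : S → A → ℝ}
    (hdA1 : IsFixedPt (Lop γ Tstar Rstar T1 R1 fun s => qmax (Q1 s)) dA1)
    (hdB1 : IsFixedPt (Lop γ T1 R1 Tstar Rstar fun s => qmax (Qstar s)) dB1)
    (hdA2 : IsFixedPt (Lop γ Tstar Rstar T2 R2 fun s => qmax (Q2 s)) dA2)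
    (hdB2 : IsFixedPt (Lop γ T2 R2 Tstar Rstar fun s => qmax (Qstar s)) dB2)
    {s0 : S} {c : ℝ} (hc1 : ∀ a, min (dA1 s0 a) (dB1 s0 a) ≤ c)
    (hc2 : ∀ a, min (dA2 s0 a) (dB2 s0 a) ≤ c) :
    qmax (Qstar s0) ≤ min (qmax (Q1 s0)) (qmax (Q2 s0)) + c := by
  rw [← min_add_add_right]
  exact le_min
    (qmax_le_qmax_add_of_min_dissimilarity_le hγ0 hγ1 hTstar hT1 hQstar hQ1 hVstar hV1
      hdA1 hdB1 hc1)
    (qmax_le_qmax_add_of_min_dissimilarity_le hγ0 hγ1 hTstar hT2 hQstar hQ2 hVstar hV2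
      hdA2 hdB2 hc2)

/-- Theorem 4.4: upper bound of return for an unknown knowledge gap. -/
theorem return_upper_bound_for_unknown_gap
    [Fintype S] [Nonempty S] [Fintype A] [Nonempty A]
    (γ : ℝ) (hγ0 : 0 ≤ γ) (hγ1 : γ < 1)
    (T1 : S → A → S → ℝ) (R1 : S → A → ℝ)
    (T2 : S → A → S → ℝ) (R2 : S → A → ℝ)
    (Tstar : S → A → S → ℝ) (Rstar : S → A → ℝ)
    (hT1 : ∀ s a s', 0 ≤ T1 s a s') (hT1sum : ∀ s a, ∑ s' : S, T1 s a s' = 1)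
    (hT2 : ∀ s a s', 0 ≤ T2 s a s') (hT2sum : ∀ s a, ∑ s' : S, T2 s a s' = 1)
    (hTstar : ∀ s a s', 0 ≤ Tstar s a s')
    (hTstarsum : ∀ s a, ∑ s' : S, Tstar s a s' = 1)
    (hR1 : ∀ s a, 0 ≤ R1 s a) (hR2 : ∀ s a, 0 ≤ R2 s a)
    (hRstar : ∀ s a, 0 ≤ Rstar s a)
    -- optimal Q-functions: the (unique) fixed points of the three Bellman operators,
    -- giving the optimal value functions `V*_{M1}`, `V*_{M2}`, `V*_{M*}` via `qmax`.
    (Q1 : S → A → ℝ) (hQ1 : ∀ s a, Q1 s a = bellman γ T1 R1 Q1 s a)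
    (Q2 : S → A → ℝ) (hQ2 : ∀ s a, Q2 s a = bellman γ T2 R2 Q2 s a)
    (Qstar : S → A → ℝ) (hQstar : ∀ s a, Qstar s a = bellman γ Tstar Rstar Qstar s a)
    -- dissimilarities needed for `Δ(M*, M1)`: `dA1 = d(M*‖M1)` and `dB1 = d(M1‖M*)`
    (dA1 : S → A → ℝ)
    (hdA1 : ∀ s a, dA1 s a = Lop γ Tstar Rstar T1 R1 (fun s => qmax (Q1 s)) dA1 s a)
    (dB1 : S → A → ℝ)
    (hdB1 : ∀ s a, dB1 s a = Lop γ T1 R1 Tstar Rstar (fun s => qmax (Qstar s)) dB1 s a)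
    -- dissimilarities needed for `Δ(M*, M2)`: `dA2 = d(M*‖M2)` and `dB2 = d(M2‖M*)`
    (dA2 : S → A → ℝ)
    (hdA2 : ∀ s a, dA2 s a = Lop γ Tstar Rstar T2 R2 (fun s => qmax (Q2 s)) dA2 s a)
    (dB2 : S → A → ℝ)
    (hdB2 : ∀ s a, dB2 s a = Lop γ T2 R2 Tstar Rstar (fun s => qmax (Qstar s)) dB2 s a)
    -- dissimilarities needed for `Δ(M1, M2)`: `d12 = d(M1‖M2)` and `d21 = d(M2‖M1)`
    (d12 : S → A → ℝ)
    (hd12 : ∀ s a, d12 s a = Lop γ T1 R1 T2 R2 (fun s => qmax (Q2 s)) d12 s a)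
    (d21 : S → A → ℝ)
    (hd21 : ∀ s a, d21 s a = Lop γ T2 R2 T1 R1 (fun s => qmax (Q1 s)) d21 s a)
    -- `M*` is intermediate between `M1` and `M2` at state `s0`
    (s0 : S)
    (hmid1 : ∀ a, min (dA1 s0 a) (dB1 s0 a) ≤
      qmax (fun a' => min (d12 s0 a') (d21 s0 a')))
    (hmid2 : ∀ a, min (dA2 s0 a) (dB2 s0 a) ≤
      qmax (fun a' => min (d12 s0 a') (d21 s0 a'))) :
    qmax (Qstar s0) ≤ min (qmax (Q1 s0)) (qmax (Q2 s0)) +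
      qmax (fun a => min (d12 s0 a) (d21 s0 a)) := by
  have hT1' : IsSubstochastic T1 := ⟨hT1, fun s a => (hT1sum s a).le⟩
  have hT2' : IsSubstochastic T2 := ⟨hT2, fun s a => (hT2sum s a).le⟩
  have hTstar' : IsSubstochastic Tstar := ⟨hTstar, fun s a => (hTstarsum s a).le⟩
  have hQ1' : IsFixedPt (bellman γ T1 R1) Q1 := (funext₂ hQ1).symm
  have hQ2' : IsFixedPt (bellman γ T2 R2) Q2 := (funext₂ hQ2).symm
  have hQstar' : IsFixedPt (bellman γ Tstar Rstar) Qstar := (funext₂ hQstar).symm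
  exact return_upper_bound_for_unknown_gap_general hγ0 hγ1 hT1' hT2' hTstar' hQ1' hQ2' hQstar'
    (qmax_nonneg_of_isFixedPt_bellman hγ0 hγ1 hT1' hR1 hQ1')
    (qmax_nonneg_of_isFixedPt_bellman hγ0 hγ1 hT2' hR2 hQ2')
    (qmax_nonneg_of_isFixedPt_bellman hγ0 hγ1 hTstar' hRstar hQstar')
    (funext₂ hdA1).symm (funext₂ hdB1).symm (funext₂ hdA2).symm (funext₂ hdB2).symm hmid1 hmid2
end
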